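/- Suppose ⟨·,·⟩ is naturally reductive (⟨[X,Y]_𝔪,Z⟩ + ⟨Y,[X,Z]_𝔪⟩ = 0 for all X,Y,Z ∈ 𝔪). If n = dim 𝔪 ≥ 5, then H² = (3/8) Σ_{i,j} ⟨[Z_i,Z_j]_𝔪,[Z_i,Z_j]_𝔪⟩·1 − (9/2) Σ_{i<j<k<l} ⟨Z_i, Jac_𝔪(Z_j,Z_k,Z_l)⟩ Z_i·Z_j·Z_k·Z_l in Cl(𝔪); if n ∈ {3,4}, then H² = (3/8) Σ_{i,j} ⟨[Z_i,Z_j]_𝔪,[Z_i,Z_j]_𝔪⟩·1, i.e. the degree-four part of H² vanishes. -/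

import Mathlib

open scoped BigOperators

/-- The quadratic form `v ↦ −⟨v,v⟩` on the subspace `𝔪`, built from a bilinear form `B`
on the ambient space; the associated Clifford algebra satisfies
`v·w + w·v = −2⟨v,w⟩·1` for `v,w ∈ 𝔪`. -/
noncomputable def mQF {𝔤 : Type*} [AddCommGroup 𝔤] [Module ℝ 𝔤]
    (𝔪 : Submodule ℝ 𝔤) (B : LinearMap.BilinForm ℝ 𝔤) : QuadraticForm ℝ ↥𝔪 :=
  LinearMap.BilinMap.toQuadraticMap ((-B).compl₁₂ 𝔪.subtype 𝔪.subtype)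

/-- The cubic element `H = (1/4) Σ_{i,j,k} ⟨[Z_i,Z_j]_𝔪, Z_k⟩ Z_i·Z_j·Z_k ∈ Cl(𝔪)`. -/
noncomputable def cubicH {𝔤 : Type*} [LieRing 𝔤] [LieAlgebra ℝ 𝔤]
    (𝔪 : Submodule ℝ 𝔤) (p𝔪 : 𝔤 →ₗ[ℝ] 𝔤) (B : LinearMap.BilinForm ℝ 𝔤)
    {n : ℕ} (Z : Fin n → 𝔤) (hZ𝔪 : ∀ i, Z i ∈ 𝔪) : CliffordAlgebra (mQF 𝔪 B) :=
  (1 / 4 : ℝ) • ∑ i, ∑ j, ∑ k, B (p𝔪 ⁅Z i, Z j⁆) (Z k) •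
    (CliffordAlgebra.ι (mQF 𝔪 B) ⟨Z i, hZ𝔪 i⟩ *
      CliffordAlgebra.ι (mQF 𝔪 B) ⟨Z j, hZ𝔪 j⟩ *
      CliffordAlgebra.ι (mQF 𝔪 B) ⟨Z k, hZ𝔪 k⟩)

/-- `Jac_𝔪(X,Y,Z) = [X,[Y,Z]_𝔪]_𝔪 + [Y,[Z,X]_𝔪]_𝔪 + [Z,[X,Y]_𝔪]_𝔪`. -/
noncomputable def jacM {𝔤 : Type*} [LieRing 𝔤] [LieAlgebra ℝ 𝔤]
    (p𝔪 : 𝔤 →ₗ[ℝ] 𝔤) (x y z : 𝔤) : 𝔤 :=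
  p𝔪 ⁅x, p𝔪 ⁅y, z⁆⁆ + p𝔪 ⁅y, p𝔪 ⁅z, x⁆⁆ + p𝔪 ⁅z, p𝔪 ⁅x, y⁆⁆

section CubicHelpers

variable {A : Type*} [Ring A] [Algebra ℝ A] {n : ℕ}

/-- the quadratic elements `D_a = Σ c_ajk e_j e_k` -/
noncomputable def auxD (c : Fin n → Fin n → Fin n → ℝ) (e : Fin n → A) (a : Fin n) : A :=
  ∑ j, ∑ k, c a j k • (e j * e k)

/-- the cubic element `S = Σ e_a D_a` -/
noncomputable def auxS (c : Fin n → Fin n → Fin n → ℝ) (e : Fin n → A) : A :=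
  ∑ a, e a * auxD c e a

lemma aux_tri (e : Fin n → A)
    (he : ∀ i j, e i * e j = -(e j * e i) - (if i = j then (2:ℝ) else 0) • (1 : A))
    (j k b : Fin n) :
    e j * e k * e b = e b * (e j * e k) + (if j = b then (2:ℝ) else 0) • e k
      - (if k = b then (2:ℝ) else 0) • e j := by
  rw [mul_assoc, he k b, mul_sub, mul_neg, ← mul_assoc, he j b]
  simp only [sub_mul, neg_mul, mul_smul_comm, smul_mul_assoc, mul_one, one_mul, mul_assoc]
  module

lemma auxD_comm (c : Fin n → Fin n → Fin n → ℝ) (e : Fin n → A)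
    (he : ∀ i j, e i * e j = -(e j * e i) - (if i = j then (2:ℝ) else 0) • (1 : A))
    (h2 : ∀ i j k, c i k j = - c i j k) (a b : Fin n) :
    auxD c e a * e b = e b * auxD c e a + (4:ℝ) • ∑ k, c a b k • e k := by
  have h : ∀ j k, c a j k • (e j * e k * e b) = c a j k • (e b * (e j * e k))
      + ((if j = b then (2 * c a j k) • e k else 0)
      - (if k = b then (2 * c a j k) • e j else 0)) := by
    intro j k
    rw [aux_tri e he]
    split_ifs <;> module
  unfold auxD
  simp only [Finset.sum_mul, Finset.mul_sum, smul_mul_assoc, mul_smul_comm]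
  simp only [h, Finset.sum_add_distrib, Finset.sum_sub_distrib]
  congr 1
  rw [Finset.sum_comm]
  simp only [Finset.sum_ite_eq', Finset.mem_univ, if_true]
  rw [Finset.smul_sum, ← Finset.sum_sub_distrib]
  refine Finset.sum_congr rfl fun k _ => ?_
  rw [h2 a b k]
  module

lemma auxS_anti (c : Fin n → Fin n → Fin n → ℝ) (e : Fin n → A)
    (he : ∀ i j, e i * e j = -(e j * e i) - (if i = j then (2:ℝ) else 0) • (1 : A))
    (h1 : ∀ i j k, c j i k = - c i j k)
    (h2 : ∀ i j k, c i k j = - c i j k) (b : Fin n) :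
    auxS c e * e b = -(e b * auxS c e) - (6:ℝ) • auxD c e b := by
  have hD : auxD c e b = - ∑ a, ∑ k, c a b k • (e a * e k) := by
    unfold auxD
    rw [← Finset.sum_neg_distrib]
    refine Finset.sum_congr rfl fun a _ => ?_
    rw [← Finset.sum_neg_distrib]
    refine Finset.sum_congr rfl fun k _ => ?_
    rw [h1 a b k, neg_smul]
  have h : ∀ a, e a * auxD c e a * e b = - (e b * (e a * auxD c e a))
      - (if a = b then (2:ℝ) • auxD c e a else 0)
      + (4:ℝ) • ∑ k, c a b k • (e a * e k) := by
    intro a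
    rw [mul_assoc, auxD_comm c e he h2, mul_add, ← mul_assoc, he a b]
    simp only [sub_mul, neg_mul, mul_smul_comm, smul_mul_assoc, one_mul, mul_assoc,
      Finset.mul_sum]
    split_ifs <;> module
  rw [auxS, Finset.sum_mul, Finset.mul_sum]
  simp only [h, Finset.sum_add_distrib, Finset.sum_sub_distrib, Finset.sum_neg_distrib,
    Finset.sum_ite_eq', Finset.mem_univ, if_true]
  rw [← Finset.smul_sum, eq_neg_iff_add_eq_zero.mp hD |> eq_neg_of_add_eq_zero_right]
  module

lemma aux_symm (e : Fin n → A)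
    (he : ∀ i j, e i * e j = -(e j * e i) - (if i = j then (2:ℝ) else 0) • (1 : A))
    (M : Fin n → Fin n → ℝ) (hM : ∀ i j, M i j = M j i) :
    ∑ i, ∑ j, M i j • (e i * e j) = - ((∑ i, M i i) • (1 : A)) := by
  have h : ∑ i, ∑ j, M i j • (e i * e j) = - (∑ i, ∑ j, M i j • (e i * e j))
      - (2:ℝ) • ((∑ i, M i i) • (1 : A)) := by
    conv_lhs =>
      enter [2, i, 2, j]
      rw [he i j]
    have h' : ∀ i j, M i j • (-(e j * e i) - (if i = j then (2:ℝ) else 0) • (1 : A))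
      = -(M j i • (e j * e i)) - (if i = j then (2 * M i j) • (1 : A) else 0) := by
      intro i j
      rw [hM i j]
      split_ifs <;> module
    simp only [h', Finset.sum_sub_distrib, Finset.sum_neg_distrib, Finset.sum_ite_eq,
      Finset.mem_univ, if_true]
    rw [Finset.sum_comm]
    congr 1
    rw [Finset.sum_smul, Finset.smul_sum]
    exact Finset.sum_congr rfl fun i _ => by module
  have h3 : (2:ℝ) • ∑ i, ∑ j, M i j • (e i * e j) = (2:ℝ) • (- ((∑ i, M i i) • (1 : A))) := by
    rw [two_smul]
    nth_rewrite 1 [h]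
    module
  exact smul_right_injective A (two_ne_zero (α := ℝ)) h3

lemma auxS_sq (c : Fin n → Fin n → Fin n → ℝ) (e : Fin n → A)
    (he : ∀ i j, e i * e j = -(e j * e i) - (if i = j then (2:ℝ) else 0) • (1 : A))
    (h1 : ∀ i j k, c j i k = - c i j k)
    (h2 : ∀ i j k, c i k j = - c i j k) :
    auxS c e * auxS c e = (-9:ℝ) • (∑ a, auxD c e a * auxD c e a)
      - (12 * ∑ i, ∑ j, ∑ k, c i j k * c i j k) • (1 : A) := by
  set S := auxS c e with hS
  set P := ∑ a, auxD c e a * auxD c e a with hP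
  have hcyc : ∀ i j k, c i j k = c k i j := fun i j k => by
    rw [h1 i k j, h2 i j k, neg_neg]
  have hSe : ∀ b, S * e b = -(e b * S) - (6:ℝ) • auxD c e b := auxS_anti c e he h1 h2
  have hSD : ∀ b, S * auxD c e b = auxD c e b * S
      - (6:ℝ) • ∑ j, ∑ k, c b j k • (auxD c e j * e k - e j * auxD c e k) := by
    intro b
    conv_lhs => rw [auxD]
    conv_rhs => enter [1]; rw [auxD]
    simp only [Finset.mul_sum, Finset.sum_mul, Finset.smul_sum]
    simp only [← Finset.sum_sub_distrib]
    refine Finset.sum_congr rfl fun j _ => Finset.sum_congr rfl fun k _ => ?_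
    have : S * (e j * e k) = e j * e k * S - (6:ℝ) • (auxD c e j * e k - e j * auxD c e k) := by
      rw [← mul_assoc, hSe j]
      simp only [sub_mul, neg_mul, smul_mul_assoc, mul_assoc]
      rw [hSe k]
      simp only [mul_sub, mul_neg, mul_smul_comm]
      module
    rw [mul_smul_comm, this, smul_mul_assoc]
    module
  have hT1 : ∑ b, ∑ j, ∑ k, c b j k • (e b * (e j * auxD c e k)) = P := by
    rw [hP]
    have : ∀ k, auxD c e k * auxD c e k = ∑ b, ∑ j, c b j k • (e b * (e j * auxD c e k)) := by
      intro k
      conv_lhs => enter [1]; rw [auxD]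
      simp only [Finset.sum_mul]
      refine Finset.sum_congr rfl fun b _ => Finset.sum_congr rfl fun j _ => ?_
      rw [hcyc b j k, smul_mul_assoc, mul_assoc]
    simp only [this]
    rw [Finset.sum_comm (γ := Fin n)]
    conv_rhs => rw [Finset.sum_comm]
    rw [Finset.sum_comm]
    refine Finset.sum_congr rfl fun b _ => ?_
    rw [Finset.sum_comm]
  have hT2 : ∑ b, ∑ j, ∑ k, c b j k • (e b * (e k * auxD c e j)) = -P := by
    rw [← hT1, ← Finset.sum_neg_distrib]
    refine Finset.sum_congr rfl fun b _ => ?_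
    rw [Finset.sum_comm, ← Finset.sum_neg_distrib]
    refine Finset.sum_congr rfl fun j _ => ?_
    rw [← Finset.sum_neg_distrib]
    refine Finset.sum_congr rfl fun k _ => ?_
    rw [h2 b j k, neg_smul]
  have hT3 : ∑ b, ∑ j, ∑ k, c b j k • (e b * ∑ l, c j k l • e l)
      = -((∑ i, ∑ j, ∑ k, c i j k * c i j k) • (1 : A)) := by
    have := aux_symm e he (fun b l => ∑ j, ∑ k, c b j k * c l j k)
      (fun i j => by simp only [mul_comm])
    rw [← this]
    refine Finset.sum_congr rfl fun b _ => ?_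
    simp only [Finset.sum_smul, Finset.mul_sum, Finset.smul_sum]
    conv_rhs => rw [Finset.sum_comm]
    refine Finset.sum_congr rfl fun j _ => ?_
    conv_rhs => rw [Finset.sum_comm]
    refine Finset.sum_congr rfl fun k _ => Finset.sum_congr rfl fun l _ => ?_
    rw [hcyc j k l, mul_smul_comm, smul_smul]
  have hmain : S * S = -(S * S) + (6:ℝ) • (-P + (4:ℝ) •
      (-((∑ i, ∑ j, ∑ k, c i j k * c i j k) • (1 : A))) - P) - (6:ℝ) • P := by
    conv_lhs => enter [2]; rw [hS, auxS]
    conv_rhs => enter [1, 1, 1, 1]; rw [hS, auxS]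
    have hb : ∀ b, S * (e b * auxD c e b) = -(e b * auxD c e b * S)
        + (6:ℝ) • (∑ j, ∑ k, c b j k • (e b * (e k * auxD c e j))
          + (4:ℝ) • ∑ j, ∑ k, c b j k • (e b * ∑ l, c j k l • e l)
          - ∑ j, ∑ k, c b j k • (e b * (e j * auxD c e k)))
        - (6:ℝ) • (auxD c e b * auxD c e b) := by
      intro b
      rw [← mul_assoc, hSe b, sub_mul, neg_mul, mul_assoc, hSD b, mul_sub, smul_mul_assoc,
        ← mul_assoc, mul_smul_comm]
      have : e b * ∑ j, ∑ k, c b j k • (auxD c e j * e k - e j * auxD c e k)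
        = ∑ j, ∑ k, c b j k • (e b * (e k * auxD c e j))
          + (4:ℝ) • ∑ j, ∑ k, c b j k • (e b * ∑ l, c j k l • e l)
          - ∑ j, ∑ k, c b j k • (e b * (e j * auxD c e k)) := by
        simp only [Finset.smul_sum (r := (4:ℝ)), Finset.mul_sum (a := e b) (s := Finset.univ) 
          (f := fun j => ∑ k, c b j k • (auxD c e j * e k - e j * auxD c e k))]
        simp only [← Finset.sum_sub_distrib, ← Finset.sum_add_distrib]
        refine Finset.sum_congr rfl fun j _ => ?_
        rw [Finset.mul_sum]
        refine Finset.sum_congr rfl fun k _ => ?_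
        rw [auxD_comm c e he h2 j k, mul_smul_comm, mul_sub, mul_add, mul_smul_comm]
        module
      rw [this]
      module
    rw [Finset.mul_sum, Finset.sum_mul]
    simp only [hb, Finset.sum_add_distrib, Finset.sum_sub_distrib, Finset.sum_neg_distrib,
      ← Finset.smul_sum (r := (6:ℝ)), ← Finset.smul_sum (r := (4:ℝ))]
    rw [hT1, hT2, hT3]
  have h3 : (2:ℝ) • (S * S) = (2:ℝ) • ((-9:ℝ) • P
      - (12 * ∑ i, ∑ j, ∑ k, c i j k * c i j k) • (1 : A)) := by
    rw [two_smul]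
    nth_rewrite 1 [hmain]
    module
  exact smul_right_injective A (two_ne_zero (α := ℝ)) h3

lemma sum_rot3 {M : Type*} [AddCommMonoid M] (g : Fin n → Fin n → Fin n → M) :
    ∑ j, ∑ k, ∑ l, g j k l = ∑ j, ∑ k, ∑ l, g k l j := by
  rw [Finset.sum_comm]
  conv_rhs => rw [Finset.sum_comm]; enter [2, k]; rw [Finset.sum_comm]
  conv_rhs => rw [Finset.sum_comm]

lemma aux_quad (e : Fin n → A)
    (he : ∀ i j, e i * e j = -(e j * e i) - (if i = j then (2:ℝ) else 0) • (1 : A))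
    (R : Fin n → Fin n → Fin n → Fin n → ℝ)
    (r2 : ∀ i j k l, R i j l k = - R i j k l)
    (r3 : ∀ i j k l, R k l i j = R i j k l) :
    (3:ℝ) • ∑ i, ∑ j, ∑ k, ∑ l, R i j k l • (e i * e j * e k * e l)
     = ∑ i, ∑ j, ∑ k, ∑ l, (R i j k l + R i k l j + R i l j k) • (e i * e j * e k * e l)
       - (6 * ∑ i, ∑ j, R i j i j) • (1 : A) := by
  set P := ∑ i, ∑ j, ∑ k, ∑ l, R i j k l • (e i * e j * e k * e l) with hP
  have hM := aux_symm e he (fun i l => ∑ j, R i j l j) (fun i l => by simp only [r3])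
  have hjj : ∀ i j k, R i j k k = 0 := fun i j k => by
    have := r2 i j k k
    linarith
  have e1 : P = ∑ i, ∑ j, ∑ k, ∑ l, R i k l j • (e i * e j * e k * e l)
      - (2 * ∑ i, ∑ j, R i j i j) • (1 : A) := by
    have key : ∀ i, ∑ j, ∑ k, ∑ l, R i j k l • (e i * e j * e k * e l) =
        ∑ j, ∑ k, ∑ l, R i k l j • (e i * e j * e k * e l)
        + (2:ℝ) • ∑ l, (∑ j, R i j l j) • (e i * e l) := by
      intro i
      rw [sum_rot3]
      have h : ∀ j k l, R i k l j • (e i * e k * e l * e j)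
          = R i k l j • (e i * e j * e k * e l)
            + (if k = j then (2 * R i k l j) • (e i * e l) else 0)
            - (if l = j then (2 * R i k l j) • (e i * e k) else 0) := by
        intro j k l
        rw [mul_assoc (e i), mul_assoc (e i), aux_tri e he k l j, mul_sub, mul_add]
        simp only [mul_smul_comm, mul_assoc]
        split_ifs <;> module
      simp only [h, Finset.sum_add_distrib, Finset.sum_sub_distrib]
      have z : ∑ j, ∑ k, ∑ l, (if l = j then (2 * R i k l j) • (e i * e k) else 0) = 0 := by
        simp [hjj]
      rw [z, sub_zero]
      congr 1
      have z2 : ∀ j, ∑ k, ∑ l, (if k = j then (2 * R i k l j) • (e i * e l) else 0)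
          = ∑ l, (2 * R i j l j) • (e i * e l) := by
        intro j
        rw [Finset.sum_comm]
        simp
      simp only [z2]
      rw [Finset.sum_comm, Finset.smul_sum]
      refine Finset.sum_congr rfl fun l _ => ?_
      rw [Finset.sum_smul, Finset.smul_sum]
      exact Finset.sum_congr rfl fun j _ => by module
    rw [hP]
    simp only [key, Finset.sum_add_distrib, ← Finset.smul_sum]
    rw [hM]
    module
  have e2 : P = ∑ i, ∑ j, ∑ k, ∑ l, R i l j k • (e i * e j * e k * e l)
      - (4 * ∑ i, ∑ j, R i j i j) • (1 : A) := by
    have key : ∀ i, ∑ j, ∑ k, ∑ l, R i l j k • (e i * e j * e k * e l) =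
        ∑ j, ∑ k, ∑ l, R i j k l • (e i * e j * e k * e l)
        - (4:ℝ) • ∑ l, (∑ j, R i j l j) • (e i * e l) := by
      intro i
      rw [sum_rot3]
      have h : ∀ j k l, R i j k l • (e i * e k * e l * e j)
          = R i j k l • (e i * e j * e k * e l)
            + (if k = j then (2 * R i j k l) • (e i * e l) else 0)
            - (if l = j then (2 * R i j k l) • (e i * e k) else 0) := by
        intro j k l
        rw [mul_assoc (e i), mul_assoc (e i), aux_tri e he k l j, mul_sub, mul_add]
        simp only [mul_smul_comm, mul_assoc]
        split_ifs <;> module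
      simp only [h, Finset.sum_add_distrib, Finset.sum_sub_distrib]
      have z1 : ∀ j, ∑ k, ∑ l, (if k = j then (2 * R i j k l) • (e i * e l) else 0)
          = - ∑ l, (2 * R i j l j) • (e i * e l) := by
        intro j
        rw [Finset.sum_comm, ← Finset.sum_neg_distrib]
        refine Finset.sum_congr rfl fun l _ => ?_
        rw [Finset.sum_ite_eq', if_pos (Finset.mem_univ _), r2 i j l j]
        module
      have z2 : ∀ j, ∑ k, ∑ l, (if l = j then (2 * R i j k l) • (e i * e k) else 0)
          = ∑ l, (2 * R i j l j) • (e i * e l) := by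
        intro j
        simp
      simp only [z1, z2]
      have z3 : ∑ j, ∑ l, (2 * R i j l j) • (e i * e l)
          = (2:ℝ) • ∑ l, (∑ j, R i j l j) • (e i * e l) := by
        rw [Finset.sum_comm, Finset.smul_sum]
        refine Finset.sum_congr rfl fun l _ => ?_
        rw [Finset.sum_smul, Finset.smul_sum]
        exact Finset.sum_congr rfl fun j _ => by module
      rw [Finset.sum_neg_distrib, z3]
      module
    simp only [key, Finset.sum_sub_distrib, ← Finset.smul_sum]
    rw [hM, ← hP]
    module
  simp only [add_smul, Finset.sum_add_distrib]
  rw [← hP]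
  have e3 : (3:ℝ) • P = P + P + P := by module
  rw [e3]
  nth_rewrite 3 [e2]
  nth_rewrite 2 [e1]
  module

lemma sum_symm4 {M : Type*} [AddCommGroup M] [Module ℝ M]
    (f : Fin n → Fin n → Fin n → Fin n → M)
    (s1 : ∀ i j k l, f j i k l = f i j k l)
    (s2 : ∀ i j k l, f i k j l = f i j k l)
    (s3 : ∀ i j k l, f i j l k = f i j k l)
    (z : ∀ i k l, f i i k l = 0) :
    ∑ i, ∑ j, ∑ k, ∑ l, f i j k l = (24:ℝ) • ∑ i, ∑ j, ∑ k, ∑ l,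
      (if i < j ∧ j < k ∧ k < l then f i j k l else 0) := by
  have z2 : ∀ i j l, f i j j l = 0 := fun i j l => by rw [← s1, s2, z]
  have z3 : ∀ i j k, f i j k k = 0 := fun i j k => by rw [← s2, s3, z2]
  have z13 : ∀ i j l, f i j i l = 0 := fun i j l => by rw [s2, z]
  have z24 : ∀ i j k, f i j k j = 0 := fun i j k => by rw [s3, z2]
  have z14 : ∀ i j k, f i j k i = 0 := fun i j k => by rw [s3, z13]
  have t2 : ∀ k l, ∑ i, ∑ j, f i j k l = (2:ℝ) • ∑ i, ∑ j, (if i < j then f i j k l else 0) := by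
    intro k l
    have h : ∀ i j, f i j k l = (if i < j then f i j k l else 0)
        + (if j < i then f j i k l else 0) := by
      intro i j
      rcases lt_trichotomy i j with h | h | h
      · simp [h, h.not_gt]
      · subst h; simp [z]
      · simp [h, h.not_gt, s1]
    conv_lhs =>
      enter [2, i, 2, j]
      rw [h i j]
    simp only [Finset.sum_add_distrib]
    rw [two_smul]
    congr 1
    rw [Finset.sum_comm]
  have t3 : ∀ l, ∑ i, ∑ j, ∑ k, (if i < j then f i j k l else 0)
      = (3:ℝ) • ∑ i, ∑ j, ∑ k, (if i < j ∧ j < k then f i j k l else 0) := by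
    intro l
    have h : ∀ i j k, (if i < j then f i j k l else 0) =
        (if i < j ∧ j < k then f i j k l else 0) + (if i < k ∧ k < j then f i k j l else 0)
        + (if k < i ∧ i < j then f k i j l else 0) := by
      intro i j k
      have a1 := s2 i j k l
      have a2 : f k i j l = f i j k l := by rw [s1, s2]
      rw [a1, a2]
      by_cases hij : i < j
      · rcases lt_trichotomy k j with h | h | h
        · rcases lt_trichotomy k i with h' | h' | h'
          · simp [hij, h, h', h.not_gt, h'.not_gt]
          · subst h'; simp [z13]
          · simp [hij, h, h', h.not_gt, h'.not_gt]
        · subst h; simp [z2]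
        · simp [hij, h, h.not_gt, (hij.trans h).not_gt]
      · have : ¬ (i < k ∧ k < j) := fun h => hij (h.1.trans h.2)
        simp [hij, this]
    conv_lhs =>
      enter [2, i, 2, j, 2, k]
      rw [h i j k]
    simp only [Finset.sum_add_distrib]
    have b1 : ∑ i, ∑ j, ∑ k, (if i < k ∧ k < j then f i k j l else 0)
        = ∑ i, ∑ j, ∑ k, (if i < j ∧ j < k then f i j k l else 0) :=
      Finset.sum_congr rfl fun i _ => Finset.sum_comm
    have b2 : ∑ i, ∑ j, ∑ k, (if k < i ∧ i < j then f k i j l else 0)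
        = ∑ i, ∑ j, ∑ k, (if i < j ∧ j < k then f i j k l else 0) :=
      (sum_rot3 (fun k i j => if k < i ∧ i < j then f k i j l else 0)).trans
        (sum_rot3 _) |>.symm
    rw [b1, b2]
    module
  have t4 : ∑ i, ∑ j, ∑ k, ∑ l, (if i < j ∧ j < k then f i j k l else 0)
      = (4:ℝ) • ∑ i, ∑ j, ∑ k, ∑ l, (if i < j ∧ j < k ∧ k < l then f i j k l else 0) := by
    have h : ∀ i j k l, (if i < j ∧ j < k then f i j k l else 0) =
        (if i < j ∧ j < k ∧ k < l then f i j k l else 0)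
        + (if i < j ∧ j < l ∧ l < k then f i j l k else 0)
        + (if i < l ∧ l < j ∧ j < k then f i l j k else 0)
        + (if l < i ∧ i < j ∧ j < k then f l i j k else 0) := by
      intro i j k l
      have a1 := s3 i j k l
      have a2 : f i l j k = f i j k l := by rw [s2, s3]
      have a3 : f l i j k = f i j k l := by rw [s1, s2, s3]
      rw [a1, a2, a3]
      by_cases e1 : l = i
      · subst e1; simp [z14]
      by_cases e2 : l = j
      · subst e2; simp [z24]
      by_cases e3 : l = k
      · subst e3; simp [z3]
      by_cases hij : i < j ∧ j < k
      · obtain ⟨p, q⟩ := hij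
        rcases lt_or_gt_of_ne e1 with u | u
        · have v := u.trans p
          have w := v.trans q
          simp [p, q, u, v, w, u.not_gt, v.not_gt, w.not_gt]
        rcases lt_or_gt_of_ne e2 with v | v
        · have w := v.trans q
          simp [p, q, u, v, w, u.not_gt, v.not_gt, w.not_gt]
        rcases lt_or_gt_of_ne e3 with w | w
        · simp [p, q, u, v, w, u.not_gt, v.not_gt, w.not_gt]
        · simp [p, q, u, v, w, u.not_gt, v.not_gt, w.not_gt]
      · rw [if_neg hij, if_neg (fun h => hij ⟨h.1, h.2.1⟩),
          if_neg (fun h => hij ⟨h.1, h.2.1.trans h.2.2⟩),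
          if_neg (fun h => hij ⟨h.1.trans h.2.1, h.2.2⟩), if_neg (fun h => hij h.2)]
        simp
    conv_lhs =>
      enter [2, i, 2, j, 2, k, 2, l]
      rw [h i j k l]
    simp only [Finset.sum_add_distrib]
    have b1 : ∑ i, ∑ j, ∑ k, ∑ l, (if i < j ∧ j < l ∧ l < k then f i j l k else 0)
        = ∑ i, ∑ j, ∑ k, ∑ l, (if i < j ∧ j < k ∧ k < l then f i j k l else 0) :=
      Finset.sum_congr rfl fun i _ => Finset.sum_congr rfl fun j _ => Finset.sum_comm
    have b2 : ∑ i, ∑ j, ∑ k, ∑ l, (if i < l ∧ l < j ∧ j < k then f i l j k else 0)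
        = ∑ i, ∑ j, ∑ k, ∑ l, (if i < j ∧ j < k ∧ k < l then f i j k l else 0) :=
      Finset.sum_congr rfl fun i _ =>
        (sum_rot3 (fun l j k => if i < l ∧ l < j ∧ j < k then f i l j k else 0)).trans
          (sum_rot3 _) |>.symm
    have b3 : ∑ i, ∑ j, ∑ k, ∑ l, (if l < i ∧ i < j ∧ j < k then f l i j k else 0)
        = ∑ i, ∑ j, ∑ k, ∑ l, (if i < j ∧ j < k ∧ k < l then f i j k l else 0) := by
      have c1 : ∀ i, ∑ j, ∑ k, ∑ l, (if l < i ∧ i < j ∧ j < k then f l i j k else 0)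
          = ∑ l, ∑ j, ∑ k, (if l < i ∧ i < j ∧ j < k then f l i j k else 0) := fun i =>
        (sum_rot3 (fun l j k => if l < i ∧ i < j ∧ j < k then f l i j k else 0)).trans
          (sum_rot3 _) |>.symm
      simp only [c1]
      rw [Finset.sum_comm]
    rw [b1, b2, b3]
    module
  have u2 : ∑ i, ∑ j, ∑ k, ∑ l, f i j k l
      = (2:ℝ) • ∑ l, ∑ i, ∑ j, ∑ k, (if i < j then f i j k l else 0) := by
    have q : ∀ g : Fin n → Fin n → Fin n → Fin n → M,
        ∑ i, ∑ j, ∑ k, ∑ l, g i j k l = ∑ l, ∑ k, ∑ i, ∑ j, g i j k l := by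
      intro g
      have : ∀ i, ∑ j, ∑ k, ∑ l, g i j k l = ∑ l, ∑ k, ∑ j, g i j k l := by
        intro i
        rw [sum_rot3]
        refine Finset.sum_congr rfl fun l _ => Finset.sum_comm
      simp only [this]
      rw [Finset.sum_comm]
      refine Finset.sum_congr rfl fun l _ => Finset.sum_comm
    rw [q]
    simp only [t2, ← Finset.smul_sum]
    congr 1
    refine Finset.sum_congr rfl fun l _ => ?_
    exact (sum_rot3 (fun i j k => if i < j then f i j k l else 0)).symm
  have q1 : ∑ l, ∑ i, ∑ j, ∑ k, (if i < j ∧ j < k then f i j k l else 0)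
      = ∑ i, ∑ j, ∑ k, ∑ l, (if i < j ∧ j < k then f i j k l else 0) := by
    rw [Finset.sum_comm]
    refine Finset.sum_congr rfl fun i _ => ?_
    rw [sum_rot3]
    conv_lhs => rw [sum_rot3]
  rw [u2]
  simp only [t3, ← Finset.smul_sum]
  rw [q1, t4]
  module

lemma aux_total (c : Fin n → Fin n → Fin n → ℝ) (e : Fin n → A)
    (he : ∀ i j, e i * e j = -(e j * e i) - (if i = j then (2:ℝ) else 0) • (1 : A))
    (h1 : ∀ i j k, c j i k = - c i j k)
    (h2 : ∀ i j k, c i k j = - c i j k)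
    (R : Fin n → Fin n → Fin n → Fin n → ℝ)
    (hR : ∀ i j k l, R i j k l = ∑ a, c a i j * c a k l) :
    ((1/4:ℝ) • auxS c e) * ((1/4:ℝ) • auxS c e)
      = ((3/8:ℝ) * ∑ i, ∑ j, R i j i j) • (1 : A)
        - (9/2:ℝ) • ∑ i, ∑ j, ∑ k, ∑ l, (if i < j ∧ j < k ∧ k < l then
          (R i j k l + R i k l j + R i l j k) • (e i * e j * e k * e l) else 0) := by
  have r1 : ∀ i j k l, R j i k l = - R i j k l := fun i j k l => by
    rw [hR, hR, ← Finset.sum_neg_distrib]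
    exact Finset.sum_congr rfl fun a _ => by rw [h2 a i j]; ring
  have r2 : ∀ i j k l, R i j l k = - R i j k l := fun i j k l => by
    rw [hR, hR, ← Finset.sum_neg_distrib]
    exact Finset.sum_congr rfl fun a _ => by rw [h2 a k l]; ring
  have r3 : ∀ i j k l, R k l i j = R i j k l := fun i j k l => by
    rw [hR, hR]
    exact Finset.sum_congr rfl fun a _ => mul_comm _ _
  have hP : ∑ a, auxD c e a * auxD c e a
      = ∑ i, ∑ j, ∑ k, ∑ l, R i j k l • (e i * e j * e k * e l) := by
    simp only [hR, Finset.sum_smul]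
    have : ∀ a, auxD c e a * auxD c e a
        = ∑ i, ∑ j, ∑ k, ∑ l, (c a i j * c a k l) • (e i * e j * e k * e l) := by
      intro a
      unfold auxD
      rw [Finset.sum_mul]
      refine Finset.sum_congr rfl fun i _ => ?_
      rw [Finset.sum_mul]
      refine Finset.sum_congr rfl fun j _ => ?_
      rw [Finset.mul_sum]
      refine Finset.sum_congr rfl fun k _ => ?_
      rw [Finset.mul_sum]
      refine Finset.sum_congr rfl fun l _ => ?_
      rw [smul_mul_smul_comm, mul_assoc (e i * e j)]
    simp only [this]
    rw [Finset.sum_comm]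
    refine Finset.sum_congr rfl fun i _ => ?_
    rw [Finset.sum_comm]
    refine Finset.sum_congr rfl fun j _ => ?_
    rw [Finset.sum_comm]
    refine Finset.sum_congr rfl fun k _ => ?_
    rw [Finset.sum_comm]
  have hN : ∑ i, ∑ j, ∑ k, c i j k * c i j k = ∑ i, ∑ j, R i j i j := by
    simp only [hR]
    conv_rhs => rw [← sum_rot3 (fun a i j => c a i j * c a i j) |>.trans (sum_rot3 _)]
  have hq := aux_quad e he R r2 r3
  have hW := sum_symm4 (fun i j k l => (R i j k l + R i k l j + R i l j k) •
      (e i * e j * e k * e l))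
    (by
      intro i j k l
      by_cases h : i = j
      · subst h; rfl
      have hs : e j * e i = -(e i * e j) := by rw [he j i, if_neg (Ne.symm h)]; simp
      have : R j i k l + R j k l i + R j l i k = -(R i j k l + R i k l j + R i l j k) := by
        linarith [r1 i j k l, r3 l i j k, r1 i l j k, r3 i k j l, r2 i k j l]
      simp only [this, hs, neg_mul, smul_neg, neg_smul, neg_neg])
    (by
      intro i j k l
      by_cases h : j = k
      · subst h; rfl
      have hs : e i * e k * e j = -(e i * e j * e k) := by
        rw [mul_assoc, he k j, if_neg (Ne.symm h)]; simp [mul_assoc]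
      have : R i k j l + R i j l k + R i l k j = -(R i j k l + R i k l j + R i l j k) := by
        linarith [r2 i k j l, r2 i j k l, r2 i l j k]
      simp only [this, hs, neg_mul, smul_neg, neg_smul, neg_neg])
    (by
      intro i j k l
      by_cases h : k = l
      · subst h; rfl
      have hs : e i * e j * e l * e k = -(e i * e j * e k * e l) := by
        rw [mul_assoc, he l k, if_neg (Ne.symm h)]; simp [mul_assoc]
      have : R i j l k + R i l k j + R i k j l = -(R i j k l + R i k l j + R i l j k) := by
        linarith [r2 i k j l, r2 i j k l, r2 i l j k]
      simp only [this, hs, neg_mul, smul_neg, neg_smul, neg_neg])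
    (by
      intro i k l
      have : R i i k l + R i k l i + R i l i k = 0 := by
        linarith [r1 i i k l, r3 i k l i, r1 l i i k, r3 i l i k, r2 i k i l, r3 i k i l, r2 i l i k]
      simp only [this, zero_smul])
  rw [smul_mul_smul_comm, auxS_sq c e he h1 h2, hP, hN]
  have hP3 : ∑ i, ∑ j, ∑ k, ∑ l, R i j k l • (e i * e j * e k * e l)
      = (1/3:ℝ) • ((3:ℝ) • ∑ i, ∑ j, ∑ k, ∑ l, R i j k l • (e i * e j * e k * e l)) := by
    module
  rw [hP3, hq, hW]
  module

lemma aux_small (hn : n ≤ 4) (c : Fin n → Fin n → Fin n → ℝ)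
    (h1 : ∀ i j k, c j i k = - c i j k)
    (h2 : ∀ i j k, c i k j = - c i j k)
    (R : Fin n → Fin n → Fin n → Fin n → ℝ)
    (hR : ∀ i j k l, R i j k l = ∑ a, c a i j * c a k l)
    (i j k l : Fin n) (h : i < j ∧ j < k ∧ k < l) :
    R i j k l + R i k l j + R i l j k = 0 := by
  have d1 : ∀ i k, c i i k = 0 := fun i k => by linarith [h1 i i k]
  have d2 : ∀ i k, c i k i = 0 := fun i k => by linarith [h2 i i k, d1 i k]
  have ha : ∀ a, a = i ∨ a = j ∨ a = k ∨ a = l := by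
    intro a
    obtain ⟨p, q, r⟩ := h
    simp only [Fin.lt_def, Fin.ext_iff] at *
    omega
  rw [hR, hR, hR, ← Finset.sum_add_distrib, ← Finset.sum_add_distrib]
  refine Finset.sum_eq_zero fun a _ => ?_
  rcases ha a with rfl | rfl | rfl | rfl <;> simp [d1, d2]

end CubicHelpers

/-- On a naturally reductive space, the square of the cubic element `H`
has only terms of degree zero and four:  for `n ≥ 5`,
`H² = (3/8) Σ_{i,j} ⟨[Z_i,Z_j]_𝔪,[Z_i,Z_j]_𝔪⟩·1
    − (9/2) Σ_{i<j<k<l} ⟨Z_i, Jac_𝔪(Z_j,Z_k,Z_l)⟩ Z_i·Z_j·Z_k·Z_l`,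
while for `n = 3, 4` the degree-four part vanishes. -/
theorem stmt9
    {𝔤 : Type*} [LieRing 𝔤] [LieAlgebra ℝ 𝔤] [FiniteDimensional ℝ 𝔤]
    (𝔥 𝔪 : Submodule ℝ 𝔤)
    (p𝔥 p𝔪 : 𝔤 →ₗ[ℝ] 𝔤)
    (hsum : ∀ x, p𝔥 x + p𝔪 x = x)
    (hmem𝔥 : ∀ x, p𝔥 x ∈ 𝔥) (hmem𝔪 : ∀ x, p𝔪 x ∈ 𝔪)
    (hid𝔥 : ∀ x ∈ 𝔥, p𝔥 x = x) (hid𝔪 : ∀ x ∈ 𝔪, p𝔪 x = x)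
    (hsub : ∀ x ∈ 𝔥, ∀ y ∈ 𝔥, ⁅x, y⁆ ∈ 𝔥)
    (hhm : ∀ x ∈ 𝔥, ∀ y ∈ 𝔪, ⁅x, y⁆ ∈ 𝔪)
    (B : LinearMap.BilinForm ℝ 𝔤)
    (hBsymm : ∀ x ∈ 𝔪, ∀ y ∈ 𝔪, B x y = B y x)
    (hBpos : ∀ x ∈ 𝔪, x ≠ 0 → 0 < B x x)
    (hnat : ∀ x ∈ 𝔪, ∀ y ∈ 𝔪, ∀ z ∈ 𝔪, B (p𝔪 ⁅x, y⁆) z + B y (p𝔪 ⁅x, z⁆) = 0)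
    {n : ℕ} (Z : Fin n → 𝔤) (hZ𝔪 : ∀ i, Z i ∈ 𝔪)
    (hZon : ∀ i j, B (Z i) (Z j) = if i = j then 1 else 0)
    (hZspan : Submodule.span ℝ (Set.range Z) = 𝔪) :
    let ι := CliffordAlgebra.ι (mQF 𝔪 B)
    let H := cubicH 𝔪 p𝔪 B Z hZ𝔪
    (5 ≤ n →
      H * H =
        ((3 / 8 : ℝ) * ∑ i, ∑ j, B (p𝔪 ⁅Z i, Z j⁆) (p𝔪 ⁅Z i, Z j⁆)) •
            (1 : CliffordAlgebra (mQF 𝔪 B))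
          - (9 / 2 : ℝ) • ∑ i, ∑ j, ∑ k, ∑ l,
              (if i < j ∧ j < k ∧ k < l then
                B (Z i) (jacM p𝔪 (Z j) (Z k) (Z l)) •
                  (ι ⟨Z i, hZ𝔪 i⟩ * ι ⟨Z j, hZ𝔪 j⟩ * ι ⟨Z k, hZ𝔪 k⟩ * ι ⟨Z l, hZ𝔪 l⟩)
               else 0)) ∧
    (n = 3 ∨ n = 4 →
      H * H =
        ((3 / 8 : ℝ) * ∑ i, ∑ j, B (p𝔪 ⁅Z i, Z j⁆) (p𝔪 ⁅Z i, Z j⁆)) •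
          (1 : CliffordAlgebra (mQF 𝔪 B))) := by
  intro ι H
  set e : Fin n → CliffordAlgebra (mQF 𝔪 B) := fun i => ι ⟨Z i, hZ𝔪 i⟩ with he_def
  set c : Fin n → Fin n → Fin n → ℝ := fun i j k => B (p𝔪 ⁅Z i, Z j⁆) (Z k) with hc
  set R : Fin n → Fin n → Fin n → Fin n → ℝ :=
    fun i j k l => B (p𝔪 ⁅Z i, Z j⁆) (p𝔪 ⁅Z k, Z l⁆) with hRdef
  have he : ∀ i j, e i * e j = -(e j * e i)
      - (if i = j then (2:ℝ) else 0) • (1 : CliffordAlgebra (mQF 𝔪 B)) := by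
    intro i j
    have h := CliffordAlgebra.ι_mul_ι_add_swap (Q := mQF 𝔪 B) ⟨Z i, hZ𝔪 i⟩ ⟨Z j, hZ𝔪 j⟩
    have h' : QuadraticMap.polar (mQF 𝔪 B) ⟨Z i, hZ𝔪 i⟩ ⟨Z j, hZ𝔪 j⟩
        = - (if i = j then (2:ℝ) else 0) := by
      have hh := hZon i j
      have hh' := hZon j i
      simp only [QuadraticMap.polar, mQF, LinearMap.BilinMap.toQuadraticMap_apply,
        LinearMap.compl₁₂_apply, Submodule.subtype_apply, LinearMap.neg_apply,
        map_add, LinearMap.add_apply, Submodule.coe_add, hh, hh']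
      by_cases hij : i = j
      · subst hij; simp; ring
      · simp [hij, Ne.symm hij]
    rw [h', Algebra.algebraMap_eq_smul_one, neg_smul] at h
    have h2 : e i * e j + e j * e i = -((if i = j then (2:ℝ) else 0) •
      (1 : CliffordAlgebra (mQF 𝔪 B))) := h
    rw [eq_sub_of_add_eq h2]
    abel
  have h1 : ∀ i j k, c j i k = - c i j k := by
    intro i j k
    simp only [hc]
    rw [← lie_skew, map_neg, map_neg, LinearMap.neg_apply]
  have h2 : ∀ i j k, c i k j = - c i j k := by
    intro i j k
    have := hnat (Z i) (hZ𝔪 i) (Z j) (hZ𝔪 j) (Z k) (hZ𝔪 k)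
    rw [hBsymm (Z j) (hZ𝔪 j) _ (hmem𝔪 _)] at this
    simp only [hc]
    linarith
  have hexp : ∀ x ∈ 𝔪, x = ∑ a, B x (Z a) • Z a := by
    intro x hx
    rw [← hZspan, Submodule.mem_span_range_iff_exists_fun] at hx
    obtain ⟨w, rfl⟩ := hx
    refine Finset.sum_congr rfl fun a _ => ?_
    congr 1
    simp [LinearMap.sum_apply, hZon]
  have hR : ∀ i j k l, R i j k l = ∑ a, c a i j * c a k l := by
    intro i j k l
    have hcyc : ∀ i j k, c i j k = c k i j := fun i j k => by
      rw [h1 i k j, h2 i j k, neg_neg]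
    simp only [hRdef]
    conv_lhs => rw [hexp _ (hmem𝔪 ⁅Z k, Z l⁆)]
    simp only [map_sum, map_smul, smul_eq_mul]
    refine Finset.sum_congr rfl fun a _ => ?_
    rw [← hcyc i j a, ← hcyc k l a, mul_comm]
  have hH : H = (1/4:ℝ) • auxS c e := by
    simp only [H, cubicH, auxS, auxD, Finset.mul_sum, mul_smul_comm, ← mul_assoc]
    rfl
  have htot := aux_total c e he h1 h2 R hR
  rw [← hH] at htot
  have hJ : ∀ i j k l, B (Z i) (jacM p𝔪 (Z j) (Z k) (Z l))
      = R i j k l + R i k l j + R i l j k := by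
    have hb : ∀ i j k l, B (Z i) (p𝔪 ⁅Z j, p𝔪 ⁅Z k, Z l⁆⁆) = R i j k l := by
      intro i j k l
      have := hnat (Z j) (hZ𝔪 j) (Z i) (hZ𝔪 i) _ (hmem𝔪 ⁅Z k, Z l⁆)
      rw [← lie_skew, map_neg, map_neg, LinearMap.neg_apply] at this
      simp only [hRdef]
      linarith
    intro i j k l
    rw [jacM, map_add, map_add, hb, hb, hb]
  refine ⟨fun _ => ?_, fun hn => ?_⟩
  · simp only [hJ]
    exact htot
  · have hW : ∑ i, ∑ j, ∑ k, ∑ l, (if i < j ∧ j < k ∧ k < l then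
          (R i j k l + R i k l j + R i l j k) • (e i * e j * e k * e l) else 0) = 0 := by
      refine Finset.sum_eq_zero fun i _ => Finset.sum_eq_zero fun j _ =>
        Finset.sum_eq_zero fun k _ => Finset.sum_eq_zero fun l _ => ?_
      split_ifs with h
      · rw [aux_small (by omega) c h1 h2 R hR i j k l h, zero_smul]
      · rfl
    rw [hW, smul_zero, sub_zero] at htot
    exact htot
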